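/- Assume the integral VHI data hypotheses together with: K ⊆ V nonempty, closed and convex; A : V → V* Lipschitz continuous and strongly monotone with constant m_A > 0; Φ : V → ℝ convex and continuous; f ∈ V*; and α_ψ c_Δ² < m_A. Let u ∈ K be the unique solution of the variational-hemivariational inequality ⟨Au, v − u⟩ + Φ(v) − Φ(u) + ∫_Δ ψ⁰(γ_ψ u; γ_ψ v − γ_ψ u) dμ ≥ ⟨f, v − u⟩ for all v ∈ K. Suppose the approximation is internal, i.e., Vʰ ⊆ V is a finite-dimensional subspace and Kʰ ⊆ Vʰ is nonempty, closed, convex with Kʰ ⊆ K, and let uʰ ∈ Kʰ be the unique solution of the corresponding discrete inequality over Kʰ. Define R_u(v, w) := ⟨Au, v − w⟩ + Φ(v) − Φ(w) + ∫_Δ ψ⁰(γ_ψ u; γ_ψ v − γ_ψ w) dμ − ⟨f, v − w⟩. Then there exists a constant c > 0, independent of Vʰ and Kʰ, such that ‖u − uʰ‖_V² ≤ c · inf_{vʰ ∈ Kʰ} [ ‖u − vʰ‖_V² + ‖γ_ψ(u − vʰ)‖_{V_ψ} + R_u(vʰ, u) ]. -/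

import Mathlib

open Filter Topology MeasureTheory RealInnerProductSpace

/-- The Clarke (generalized) directional derivative of `f` at `u` in direction `v`. -/
noncomputable def clarkeDeriv {X : Type*} [NormedAddCommGroup X] [NormedSpace ℝ X]
    (f : X → ℝ) (u v : X) : ℝ :=
  Filter.limsup (fun p : X × ℝ => (f (p.1 + p.2 • v) - f p.1) / p.2)
    ((𝓝 u) ×ˢ 𝓝[>] (0:ℝ))

/-!
Testing the inequality for `u` with `uh` and the discrete one with `vh`, and adding, bounds
`(A u - A uh) (u - uh)` by the residual `R_u(vh, u)`, a Lipschitz term in `A`, and integrals of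
Clarke derivatives. Subadditivity of `ψ⁰(z; ·)` splits off the relaxed monotonicity defect
`αψ ‖γψ (u - uh)‖²`, which the smallness condition absorbs into the strong monotonicity of `A`.
By Hahn–Banach, `ψ⁰(z; ·)` is the support function of the Clarke subdifferential, so the growth
condition makes the remaining integrals at most
`cψ (2 √μ(Δ) + 2 ‖γψ u‖ + ‖γψ (u - uh)‖) ‖γψ (u - vh)‖`. The first two summands only see the
exact solution, and the last one is quadratic in the errors, hence absorbed by Young's inequality.
-/

section ClarkeDerivative

variable {X : Type*} [NormedAddCommGroup X] [NormedSpace ℝ X] {f : X → ℝ}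

/-- The difference quotient `(f (y + t • v) - f y) / t` at the point `p = (y, t)`, whose upper limit
as `y → u` and `t ↓ 0` is `clarkeDeriv f u v`. -/
noncomputable def clarkeQuotient (f : X → ℝ) (v : X) (p : X × ℝ) : ℝ :=
  (f (p.1 + p.2 • v) - f p.1) / p.2

theorem clarkeQuotient_add (f : X → ℝ) (v w : X) (p : X × ℝ) :
    clarkeQuotient f (v + w) p =
      clarkeQuotient f v p + clarkeQuotient f w (p.1 + p.2 • v, p.2) := by
  simp only [clarkeQuotient, smul_add, ← add_assoc]
  ring

theorem clarkeQuotient_smul (f : X → ℝ) {c : ℝ} (hc : c ≠ 0) (v : X) (p : X × ℝ) :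
    clarkeQuotient f (c • v) p = c * clarkeQuotient f v (p.1, c * p.2) := by
  simp only [clarkeQuotient, smul_smul, mul_comm p.2 c, ← div_div, ← mul_div_assoc]
  rw [mul_div_cancel_left₀ _ hc]

theorem tendsto_add_smul_nhds_prod_nhdsGT (z v : X) :
    Tendsto (fun p : X × ℝ => p.1 + p.2 • v) (𝓝 z ×ˢ 𝓝[>] 0) (𝓝 z) := by
  have hcont : Continuous fun p : X × ℝ => p.1 + p.2 • v := by fun_prop
  have hlim := hcont.tendsto (z, 0)
  rw [zero_smul, add_zero, nhds_prod_eq] at hlim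
  exact hlim.mono_left (prod_mono le_rfl nhdsWithin_le_nhds)

theorem eventually_abs_clarkeQuotient_le {L : NNReal} {s : Set X} {z : X}
    (hL : LipschitzOnWith L f s) (hs : s ∈ 𝓝 z) (v : X) :
    ∀ᶠ p in 𝓝 z ×ˢ 𝓝[>] (0 : ℝ), |clarkeQuotient f v p| ≤ L * ‖v‖ := by
  filter_upwards [(tendsto_add_smul_nhds_prod_nhdsGT z v).eventually hs,
    tendsto_fst.eventually hs, tendsto_snd.eventually self_mem_nhdsWithin] with p hpv hp hpos
  have hdist := hL.dist_le_mul _ hpv _ hp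
  rw [Real.dist_eq, dist_eq_norm, add_sub_cancel_left, norm_smul, Real.norm_of_nonneg hpos.le]
    at hdist
  rw [clarkeQuotient, abs_div, abs_of_pos hpos, div_le_iff₀ hpos]
  linarith

theorem eventually_clarkeQuotient_lt (hf : LocallyLipschitz f) {z v : X} {b : ℝ}
    (hb : clarkeDeriv f z v < b) :
    ∀ᶠ p in 𝓝 z ×ˢ 𝓝[>] (0 : ℝ), clarkeQuotient f v p < b := by
  obtain ⟨L, s, hs, hL⟩ := hf z
  exact eventually_lt_of_limsup_lt hb (isBoundedUnder_of_eventually_le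
    ((eventually_abs_clarkeQuotient_le hL hs v).mono fun _ hp => (abs_le.1 hp).2))

theorem clarkeDeriv_le_of_eventually_le (hf : LocallyLipschitz f) {z v : X} {b : ℝ}
    (hb : ∀ᶠ p in 𝓝 z ×ˢ 𝓝[>] (0 : ℝ), clarkeQuotient f v p ≤ b) :
    clarkeDeriv f z v ≤ b := by
  obtain ⟨L, s, hs, hL⟩ := hf z
  refine limsup_le_of_le (IsBoundedUnder.isCoboundedUnder_le
    (isBoundedUnder_of_eventually_ge (a := -(L * ‖v‖)) ?_)) hb
  exact (eventually_abs_clarkeQuotient_le hL hs v).mono fun _ hp => (abs_le.1 hp).1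

theorem exists_eventually_clarkeDeriv_le_mul_norm (hf : LocallyLipschitz f) (z : X) :
    ∃ L : NNReal, ∀ᶠ y in 𝓝 z, ∀ v, clarkeDeriv f y v ≤ L * ‖v‖ := by
  obtain ⟨L, s, hs, hL⟩ := hf z
  refine ⟨L, (eventually_mem_nhds_iff.2 hs).mono fun y hy v => ?_⟩
  exact clarkeDeriv_le_of_eventually_le hf
    ((eventually_abs_clarkeQuotient_le hL hy v).mono fun _ hp => (abs_le.1 hp).2)

theorem clarkeDeriv_zero_right (f : X → ℝ) (z : X) : clarkeDeriv f z 0 = 0 := by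
  simp [clarkeDeriv]

theorem clarkeDeriv_add_le (hf : LocallyLipschitz f) (z v w : X) :
    clarkeDeriv f z (v + w) ≤ clarkeDeriv f z v + clarkeDeriv f z w := by
  refine le_of_forall_pos_le_add fun ε hε => clarkeDeriv_le_of_eventually_le hf ?_
  have hv := eventually_clarkeQuotient_lt hf
    (lt_add_of_pos_right (clarkeDeriv f z v) (half_pos hε))
  have hw := eventually_clarkeQuotient_lt hf
    (lt_add_of_pos_right (clarkeDeriv f z w) (half_pos hε))
  have hshift : Tendsto (fun p : X × ℝ => (p.1 + p.2 • v, p.2)) (𝓝 z ×ˢ 𝓝[>] 0)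
      (𝓝 z ×ˢ 𝓝[>] 0) :=
    (tendsto_add_smul_nhds_prod_nhdsGT z v).prodMk tendsto_snd
  filter_upwards [hv, hshift.eventually hw] with p hpv hpw
  rw [clarkeQuotient_add]
  linarith

theorem clarkeDeriv_smul_le (hf : LocallyLipschitz f) (z v : X) {c : ℝ} (hc : 0 < c) :
    clarkeDeriv f z (c • v) ≤ c * clarkeDeriv f z v := by
  rw [← div_le_iff₀' hc]
  refine le_of_forall_gt_imp_ge_of_dense fun b hb => ?_
  rw [div_le_iff₀' hc]
  have hscale : Tendsto (c * ·) (𝓝[>] 0) (𝓝[>] 0) :=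
    tendsto_comap.mono_left (comap_mulLeft_nhdsGT_zero hc).ge
  refine clarkeDeriv_le_of_eventually_le hf ?_
  filter_upwards [(tendsto_id.prodMap hscale).eventually (eventually_clarkeQuotient_lt hf hb)]
    with p hp
  rw [clarkeQuotient_smul f hc.ne']
  exact mul_le_mul_of_nonneg_left hp.le hc.le

theorem clarkeDeriv_smul (hf : LocallyLipschitz f) (z v : X) {c : ℝ} (hc : 0 < c) :
    clarkeDeriv f z (c • v) = c * clarkeDeriv f z v := by
  refine le_antisymm (clarkeDeriv_smul_le hf z v hc) ?_
  have hinv := clarkeDeriv_smul_le hf z (c • v) (inv_pos.2 hc)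
  rwa [inv_smul_smul₀ hc.ne', le_inv_mul_iff₀ hc] at hinv

theorem neg_clarkeDeriv_neg_le (hf : LocallyLipschitz f) (z v : X) :
    -clarkeDeriv f z (-v) ≤ clarkeDeriv f z v := by
  have hadd := clarkeDeriv_add_le hf z v (-v)
  rw [add_neg_cancel, clarkeDeriv_zero_right] at hadd
  linarith

theorem eventually_clarkeDeriv_lt (hf : LocallyLipschitz f) {z v : X} {b : ℝ}
    (hb : clarkeDeriv f z v < b) : ∀ᶠ y in 𝓝 z, clarkeDeriv f y v < b := by
  obtain ⟨b', hb', hbb'⟩ := exists_between hb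
  obtain ⟨P, hP, T, hT, hPT⟩ := eventually_prod_iff.1 (eventually_clarkeQuotient_lt hf hb')
  filter_upwards [hP.eventually_nhds] with y hy
  refine (clarkeDeriv_le_of_eventually_le hf ?_).trans_lt hbb'
  exact (hy.prod_mk hT).mono fun _ hp => (hPT hp.1 hp.2).le

theorem upperSemicontinuous_clarkeDeriv (hf : LocallyLipschitz f) :
    UpperSemicontinuous fun p : X × X => clarkeDeriv f p.1 p.2 := by
  rintro ⟨z, v⟩ b hb
  obtain ⟨b', hb', hbb'⟩ := exists_between hb
  obtain ⟨L, hL⟩ := exists_eventually_clarkeDeriv_le_mul_norm hf z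
  have hdir : ∀ᶠ w in 𝓝 v, b' + L * ‖w - v‖ < b := by
    have hcont : Continuous fun w => b' + L * ‖w - v‖ := by fun_prop
    exact hcont.continuousAt.eventually_lt continuousAt_const (by simpa using hbb')
  rw [nhds_prod_eq]
  filter_upwards [((eventually_clarkeDeriv_lt hf hb').and hL).prod_mk hdir]
  rintro ⟨y, w⟩ ⟨⟨hyv, hyL⟩, hw⟩
  calc clarkeDeriv f y w = clarkeDeriv f y (v + (w - v)) := by rw [add_sub_cancel]
    _ ≤ clarkeDeriv f y v + clarkeDeriv f y (w - v) := clarkeDeriv_add_le hf y v (w - v)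
    _ ≤ b' + L * ‖w - v‖ := add_le_add hyv.le (hyL (w - v))
    _ < b := hw

end ClarkeDerivative

section ClarkeSubdifferential

variable {X : Type*} [NormedAddCommGroup X] [NormedSpace ℝ X] {f : X → ℝ}

/-- The Clarke subdifferential `∂f(z)`, as a set of continuous linear functionals. -/
def clarkeSubdifferential (f : X → ℝ) (z : X) : Set (StrongDual ℝ X) :=
  {ξ | ∀ v, ξ v ≤ clarkeDeriv f z v}

theorem exists_linearMap_le_clarkeDeriv (hf : LocallyLipschitz f) (z w : X) :
    ∃ g : X →ₗ[ℝ] ℝ, (∀ v, g v ≤ clarkeDeriv f z v) ∧ g w = clarkeDeriv f z w := by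
  have hwell : ∀ t : ℝ, t • w = 0 → RingHom.id ℝ t • clarkeDeriv f z w = 0 := fun t ht => by
    rcases smul_eq_zero.1 ht with rfl | rfl <;> simp [clarkeDeriv_zero_right]
  let p : X →ₗ.[ℝ] ℝ := .mkSpanSingleton' w (clarkeDeriv f z w) hwell
  have hp : ∀ x : p.domain, p x ≤ clarkeDeriv f z x := by
    rintro ⟨x, hx⟩
    obtain ⟨t, rfl⟩ := Submodule.mem_span_singleton.1 hx
    rw [LinearPMap.mkSpanSingleton'_apply w (clarkeDeriv f z w) hwell t hx]
    rcases lt_trichotomy t 0 with ht | rfl | ht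
    · have hneg := neg_clarkeDeriv_neg_le hf z (t • w)
      rw [← neg_smul, clarkeDeriv_smul hf z w (neg_pos.2 ht)] at hneg
      simpa using hneg
    · simp [clarkeDeriv_zero_right]
    · exact (clarkeDeriv_smul hf z w ht).ge
  obtain ⟨g, hgp, hg⟩ := exists_extension_of_le_sublinear p (clarkeDeriv f z)
    (fun c hc v => clarkeDeriv_smul hf z v hc) (clarkeDeriv_add_le hf z) hp
  refine ⟨g, hg, ?_⟩
  rw [hgp ⟨w, Submodule.mem_span_singleton_self w⟩]
  exact LinearPMap.mkSpanSingleton'_apply_self w _ hwell _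

theorem exists_mem_clarkeSubdifferential_apply_eq (hf : LocallyLipschitz f) (z w : X) :
    ∃ ξ ∈ clarkeSubdifferential f z, ξ w = clarkeDeriv f z w := by
  obtain ⟨L, hL⟩ := exists_eventually_clarkeDeriv_le_mul_norm hf z
  obtain ⟨g, hg, hgw⟩ := exists_linearMap_le_clarkeDeriv hf z w
  have hle : ∀ v, g v ≤ L * ‖v‖ := fun v => (hg v).trans (hL.self_of_nhds v)
  have hbound : ∀ v, ‖g v‖ ≤ L * ‖v‖ := fun v =>
    abs_le'.2 ⟨hle v, by simpa using hle (-v)⟩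
  exact ⟨g.mkContinuous L hbound, hg, hgw⟩

theorem abs_clarkeDeriv_le_of_forall_mem_clarkeSubdifferential_norm_le (hf : LocallyLipschitz f)
    {z : X} {C : ℝ} (hC : ∀ ξ ∈ clarkeSubdifferential f z, ‖ξ‖ ≤ C) (w : X) :
    |clarkeDeriv f z w| ≤ C * ‖w‖ := by
  have hle : ∀ v, clarkeDeriv f z v ≤ C * ‖v‖ := fun v => by
    obtain ⟨ξ, hξ, hξv⟩ := exists_mem_clarkeSubdifferential_apply_eq hf z v
    exact hξv ▸ (le_abs_self _).trans (ξ.le_of_opNorm_le (hC ξ hξ) v)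
  have hneg := hle (-w)
  rw [norm_neg] at hneg
  exact abs_le.2 ⟨by linarith [neg_clarkeDeriv_neg_le hf z w], hle w⟩

/-- The growth condition `‖ξ‖ ≤ C (1 + ‖z‖)` for all `ξ ∈ ∂f(z)`, which makes `∫ f⁰(a; h) dμ` finite
for square-integrable `a` and `h`. -/
def HasLinearClarkeGrowth (f : X → ℝ) (C : ℝ) : Prop :=
  ∀ z, ∀ ξ ∈ clarkeSubdifferential f z, ‖ξ‖ ≤ C * (1 + ‖z‖)

/-- Relaxed monotonicity of `∂f` with constant `α`, expressed through the Clarke derivative. For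
`α = 0` it holds when `f` is convex. -/
def IsClarkeRelaxedMonotone (f : X → ℝ) (α : ℝ) : Prop :=
  ∀ z₁ z₂, clarkeDeriv f z₁ (z₂ - z₁) + clarkeDeriv f z₂ (z₁ - z₂) ≤ α * ‖z₁ - z₂‖ ^ 2

variable {C : ℝ}

theorem hasLinearClarkeGrowth_iff_inner {H : Type*} [NormedAddCommGroup H]
    [InnerProductSpace ℝ H] [CompleteSpace H] {f : H → ℝ} :
    HasLinearClarkeGrowth f C ↔
      ∀ z ξ, (∀ w, ⟪ξ, w⟫ ≤ clarkeDeriv f z w) → ‖ξ‖ ≤ C * (1 + ‖z‖) := by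
  refine forall_congr' fun z => (InnerProductSpace.toDual ℝ H).surjective.forall.trans ?_
  simp only [clarkeSubdifferential, Set.mem_ofPred_eq, InnerProductSpace.toDual_apply_apply,
    LinearIsometryEquiv.norm_map]

theorem HasLinearClarkeGrowth.nonneg (hC : HasLinearClarkeGrowth f C) (hf : LocallyLipschitz f) :
    0 ≤ C := by
  obtain ⟨ξ, hξ, -⟩ := exists_mem_clarkeSubdifferential_apply_eq hf 0 0
  simpa using (norm_nonneg ξ).trans (hC 0 ξ hξ)

theorem HasLinearClarkeGrowth.norm_clarkeDeriv_le (hC : HasLinearClarkeGrowth f C)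
    (hf : LocallyLipschitz f) (z w : X) :
    ‖clarkeDeriv f z w‖ ≤ C * ((1 + ‖z‖) * ‖w‖) :=
  (abs_clarkeDeriv_le_of_forall_mem_clarkeSubdifferential_norm_le hf (hC z) w).trans_eq
    (mul_assoc _ _ _)

end ClarkeSubdifferential

section LpNorm

variable {Δ : Type*} [MeasurableSpace Δ] {μ : Measure Δ}
  {E F : Type*} [NormedAddCommGroup E] [NormedAddCommGroup F]

theorem lpNorm_two_eq_sqrt_integral {a : Δ → E} (ha : AEStronglyMeasurable a μ) :
    lpNorm a 2 μ = √(∫ x, ‖a x‖ ^ 2 ∂μ) := by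
  rw [lpNorm_eq_integral_norm_rpow_toReal two_ne_zero ENNReal.ofNat_ne_top ha, Real.sqrt_eq_rpow]
  simp

theorem sq_lpNorm_two_eq_integral {a : Δ → E} (ha : AEStronglyMeasurable a μ) :
    lpNorm a 2 μ ^ 2 = ∫ x, ‖a x‖ ^ 2 ∂μ := by
  rw [lpNorm_two_eq_sqrt_integral ha, Real.sq_sqrt (integral_nonneg fun x => sq_nonneg ‖a x‖)]

theorem integral_norm_mul_norm_le_lpNorm_mul_lpNorm {a : Δ → E} {b : Δ → F}
    (ha : MemLp a 2 μ) (hb : MemLp b 2 μ) :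
    ∫ x, ‖a x‖ * ‖b x‖ ∂μ ≤ lpNorm a 2 μ * lpNorm b 2 μ := by
  rw [lpNorm_two_eq_sqrt_integral ha.1, lpNorm_two_eq_sqrt_integral hb.1]
  simpa [Real.sqrt_eq_rpow] using integral_mul_norm_le_Lp_mul_Lq (μ := μ)
    (f := fun x => ‖a x‖) (g := fun x => ‖b x‖) Real.HolderConjugate.two_two
    (by simpa using ha.norm) (by simpa using hb.norm)

theorem Lp_norm_eq_lpNorm {p : ENNReal} (a : Lp E p μ) : ‖a‖ = lpNorm a p μ := by
  rw [Lp.norm_def, toReal_eLpNorm (Lp.aestronglyMeasurable a)]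

theorem Lp_norm_sub_eq_lpNorm {p : ENNReal} (a b : Lp E p μ) :
    ‖a - b‖ = lpNorm (⇑a - ⇑b) p μ := by
  rw [Lp.norm_def, eLpNorm_congr_ae (Lp.coeFn_sub a b),
    toReal_eLpNorm ((Lp.aestronglyMeasurable a).sub (Lp.aestronglyMeasurable b))]

variable [IsFiniteMeasure μ]

theorem memLp_one_add_norm {p : ENNReal} {a : Δ → E} (ha : MemLp a p μ) :
    MemLp (fun x => 1 + ‖a x‖) p μ :=
  (memLp_const (1 : ℝ)).add ha.norm

theorem lpNorm_two_one_add_norm_le {a : Δ → E} (ha : AEStronglyMeasurable a μ) :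
    lpNorm (fun x => 1 + ‖a x‖) 2 μ ≤ √(μ.real Set.univ) + lpNorm a 2 μ := by
  have hadd := lpNorm_add_le (g := fun x => ‖a x‖) (memLp_const (1 : ℝ) (μ := μ)) one_le_two
  rw [lpNorm_norm ha] at hadd
  refine hadd.trans_eq ?_
  simp [Real.sqrt_eq_rpow]

end LpNorm

section ClarkeIntegral

variable {Δ : Type*} [MeasurableSpace Δ] {μ : Measure Δ}
  {E : Type*} [NormedAddCommGroup E] [NormedSpace ℝ E] {ψ : E → ℝ}

/-- The integral `∫ ψ⁰(a; h) dμ` of the Clarke derivatives of a superpotential `ψ` along the field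
`a` in the direction `h`; the hemivariational term of the inequality. -/
noncomputable def clarkeIntegral (μ : Measure Δ) (ψ : E → ℝ) (a h : Δ → E) : ℝ :=
  ∫ x, clarkeDeriv ψ (a x) (h x) ∂μ

theorem aestronglyMeasurable_clarkeDeriv (hψ : LocallyLipschitz ψ) {a h : Δ → E}
    (ha : AEStronglyMeasurable a μ) (hh : AEStronglyMeasurable h μ) :
    AEStronglyMeasurable (fun x => clarkeDeriv ψ (a x) (h x)) μ := by
  borelize (E × E)
  exact ((upperSemicontinuous_clarkeDeriv hψ).measurable.comp_aemeasurable
    (ha.prodMk hh).aemeasurable).aestronglyMeasurable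

variable [IsFiniteMeasure μ] {C : ℝ} {a b c h : Δ → E}

theorem integrable_clarkeDeriv (hψ : LocallyLipschitz ψ)
    (hC : HasLinearClarkeGrowth ψ C)
    (ha : MemLp a 2 μ) (hh : MemLp h 2 μ) :
    Integrable (fun x => clarkeDeriv ψ (a x) (h x)) μ :=
  (((memLp_one_add_norm ha).integrable_mul hh.norm).const_mul C).mono'
    (aestronglyMeasurable_clarkeDeriv hψ ha.1 hh.1)
    (.of_forall fun _ => hC.norm_clarkeDeriv_le hψ _ _)

theorem abs_clarkeIntegral_le (hψ : LocallyLipschitz ψ)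
    (hC : HasLinearClarkeGrowth ψ C)
    (ha : MemLp a 2 μ) (hh : MemLp h 2 μ) :
    |clarkeIntegral μ ψ a h| ≤ C * ((√(μ.real Set.univ) + lpNorm a 2 μ) * lpNorm h 2 μ) := by
  have hC0 : 0 ≤ C := hC.nonneg hψ
  calc |clarkeIntegral μ ψ a h|
      ≤ ∫ x, C * ((1 + ‖a x‖) * ‖h x‖) ∂μ :=
        norm_integral_le_of_norm_le (((memLp_one_add_norm ha).integrable_mul hh.norm).const_mul C)
          (.of_forall fun _ => hC.norm_clarkeDeriv_le hψ _ _)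
    _ = C * ∫ x, ‖1 + ‖a x‖‖ * ‖h x‖ ∂μ := by
        simp_rw [integral_const_mul, Real.norm_of_nonneg (add_nonneg zero_le_one (norm_nonneg _))]
    _ ≤ C * (lpNorm (fun x => 1 + ‖a x‖) 2 μ * lpNorm h 2 μ) := by
        gcongr
        exact integral_norm_mul_norm_le_lpNorm_mul_lpNorm (memLp_one_add_norm ha) hh
    _ ≤ C * ((√(μ.real Set.univ) + lpNorm a 2 μ) * lpNorm h 2 μ) := by
        gcongr
        · exact lpNorm_nonneg
        · exact lpNorm_two_one_add_norm_le ha.1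

theorem clarkeIntegral_sub_le (hψ : LocallyLipschitz ψ)
    (hC : HasLinearClarkeGrowth ψ C)
    (ha : MemLp a 2 μ) (hb : MemLp b 2 μ) (hh : MemLp h 2 μ) :
    clarkeIntegral μ ψ b h - clarkeIntegral μ ψ a h ≤
      C * ((2 * (√(μ.real Set.univ) + lpNorm a 2 μ) + lpNorm (a - b) 2 μ) * lpNorm h 2 μ) := by
  have hC0 : 0 ≤ C := hC.nonneg hψ
  have hab : lpNorm b 2 μ ≤ lpNorm a 2 μ + lpNorm (a - b) 2 μ :=
    lpNorm_le_lpNorm_add_lpNorm_sub ha one_le_two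
  calc clarkeIntegral μ ψ b h - clarkeIntegral μ ψ a h
      ≤ C * ((√(μ.real Set.univ) + lpNorm b 2 μ) * lpNorm h 2 μ) +
          C * ((√(μ.real Set.univ) + lpNorm a 2 μ) * lpNorm h 2 μ) := by
        linarith [le_of_abs_le (abs_clarkeIntegral_le hψ hC hb hh),
          neg_le_of_abs_le (abs_clarkeIntegral_le hψ hC ha hh)]
    _ ≤ C * ((√(μ.real Set.univ) + (lpNorm a 2 μ + lpNorm (a - b) 2 μ)) * lpNorm h 2 μ) +
          C * ((√(μ.real Set.univ) + lpNorm a 2 μ) * lpNorm h 2 μ) := by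
        gcongr
        exact lpNorm_nonneg
    _ = _ := by ring

theorem clarkeIntegral_add_clarkeIntegral_le (hψ : LocallyLipschitz ψ)
    (hC : HasLinearClarkeGrowth ψ C) {α : ℝ}
    (hmon : IsClarkeRelaxedMonotone ψ α)
    (ha : MemLp a 2 μ) (hb : MemLp b 2 μ) (hc : MemLp c 2 μ) :
    clarkeIntegral μ ψ a (b - a) + clarkeIntegral μ ψ b (c - b) ≤
      α * lpNorm (a - b) 2 μ ^ 2 + clarkeIntegral μ ψ b (c - a) := by
  have hpointwise : ∀ x, clarkeDeriv ψ (a x) ((b - a) x) + clarkeDeriv ψ (b x) ((c - b) x) ≤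
      α * ‖(a - b) x‖ ^ 2 + clarkeDeriv ψ (b x) ((c - a) x) := fun x => by
    have hadd := clarkeDeriv_add_le hψ (b x) (c x - a x) (a x - b x)
    rw [sub_add_sub_cancel] at hadd
    simp only [Pi.sub_apply]
    linarith [hmon (a x) (b x)]
  have hab := integrable_clarkeDeriv hψ hC ha (hb.sub ha)
  have hbc := integrable_clarkeDeriv hψ hC hb (hc.sub hb)
  have hac := integrable_clarkeDeriv hψ hC hb (hc.sub ha)
  have hsq := ((memLp_two_iff_integrable_sq_norm (ha.sub hb).1).1 (ha.sub hb)).const_mul α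
  simp only [clarkeIntegral]
  rw [sq_lpNorm_two_eq_integral (ha.sub hb).1, ← integral_const_mul, ← integral_add hab hbc,
    ← integral_add hsq hac]
  exact integral_mono (hab.add hbc) (hsq.add hac) hpointwise

end ClarkeIntegral

section ErrorEstimate

theorem sq_le_mul_of_mul_sq_le {δ B D d e g r : ℝ} (hδ : 0 < δ) (hD : 0 ≤ D) (hg : 0 ≤ g)
    (hr : 0 ≤ r) (h : δ * e ^ 2 ≤ B * (e * d) + D * g + r) :
    e ^ 2 ≤ 2 / δ * (B ^ 2 / (2 * δ) + D + 1) * (d ^ 2 + g + r) := by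
  have young : B * (e * d) ≤ δ / 2 * e ^ 2 + B ^ 2 / (2 * δ) * d ^ 2 := by
    have hsq : δ / 2 * e ^ 2 + B ^ 2 / (2 * δ) * d ^ 2 - B * (e * d) =
        (δ * e - B * d) ^ 2 / (2 * δ) := by
      field_simp
      ring
    exact sub_nonneg.1 (hsq ▸ by positivity)
  set q := B ^ 2 / (2 * δ)
  have : 0 ≤ q := by positivity
  have hcross : 0 ≤ (D + 1) * d ^ 2 + (q + 1) * g + (q + D) * r := by positivity
  have hhalf : δ / 2 * e ^ 2 ≤ (q + D + 1) * (d ^ 2 + g + r) := by linarith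
  calc e ^ 2 = 2 / δ * (δ / 2 * e ^ 2) := by field_simp
    _ ≤ 2 / δ * ((q + D + 1) * (d ^ 2 + g + r)) := by gcongr
    _ = 2 / δ * (q + D + 1) * (d ^ 2 + g + r) := by ring

variable {V : Type*} [SeminormedAddCommGroup V] [NormedSpace ℝ V]
  {Δ : Type*} [MeasurableSpace Δ] {μ : Measure Δ}
  {E : Type*} [NormedAddCommGroup E] [NormedSpace ℝ E]

/-- The residual `R_u(v, w) = ⟨Au, v - w⟩ + Φ(v) - Φ(w) + ∫ ψ⁰(γu; γv - γw) dμ - ⟨f, v - w⟩`, whose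
sign for `w = u` expresses the variational-hemivariational inequality. -/
noncomputable def vhiResidual (γ : V →L[ℝ] Lp E 2 μ) (ψ : E → ℝ) (A : V → StrongDual ℝ V)
    (Φ : V → ℝ) (f : StrongDual ℝ V) (u v w : V) : ℝ :=
  A u (v - w) + Φ v - Φ w + clarkeIntegral μ ψ (γ u) (⇑(γ v) - ⇑(γ w)) - f (v - w)

/-- `u` solves the variational-hemivariational inequality over `K`. -/
def IsVHISolution (γ : V →L[ℝ] Lp E 2 μ) (ψ : E → ℝ) (A : V → StrongDual ℝ V)
    (Φ : V → ℝ) (f : StrongDual ℝ V) (K : Set V) (u : V) : Prop :=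
  u ∈ K ∧ ∀ v ∈ K, 0 ≤ vhiResidual γ ψ A Φ f u v u

variable {γ : V →L[ℝ] Lp E 2 μ} {ψ : E → ℝ} {A : V → StrongDual ℝ V} {Φ : V → ℝ}
  {f : StrongDual ℝ V} {u uh vh : V}

theorem apply_sub_le_of_vhiResidual_nonneg (hu : 0 ≤ vhiResidual γ ψ A Φ f u uh u)
    (huh : 0 ≤ vhiResidual γ ψ A Φ f uh vh uh) :
    (A u - A uh) (u - uh) ≤ (A uh - A u) (vh - u) + vhiResidual γ ψ A Φ f u vh u +
      (clarkeIntegral μ ψ (γ u) (⇑(γ uh) - ⇑(γ u)) +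
        clarkeIntegral μ ψ (γ uh) (⇑(γ vh) - ⇑(γ uh)) -
        clarkeIntegral μ ψ (γ u) (⇑(γ vh) - ⇑(γ u))) := by
  simp only [vhiResidual, map_sub, sub_apply] at hu huh ⊢
  linarith

variable [IsFiniteMeasure μ] {C α c L m : ℝ}

theorem clarkeIntegral_error_le (hγ : ∀ v, ‖γ v‖ ≤ c * ‖v‖) (hψ : LocallyLipschitz ψ)
    (hC : HasLinearClarkeGrowth ψ C) (hα : 0 ≤ α)
    (hmon : IsClarkeRelaxedMonotone ψ α)
    (u uh vh : V) :
    clarkeIntegral μ ψ (γ u) (⇑(γ uh) - ⇑(γ u)) +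
        clarkeIntegral μ ψ (γ uh) (⇑(γ vh) - ⇑(γ uh)) -
        clarkeIntegral μ ψ (γ u) (⇑(γ vh) - ⇑(γ u)) ≤
      α * c ^ 2 * ‖u - uh‖ ^ 2 + C * c ^ 2 * (‖u - uh‖ * ‖u - vh‖) +
        2 * C * (√(μ.real Set.univ) + ‖γ u‖) * ‖γ (u - vh)‖ := by
  have hC0 : 0 ≤ C := hC.nonneg hψ
  have hmem : ∀ v, MemLp (γ v) 2 μ := fun v => Lp.memLp (γ v)
  have hmono := clarkeIntegral_add_clarkeIntegral_le hψ hC hmon (hmem u) (hmem uh) (hmem vh)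
  have hgrowth := clarkeIntegral_sub_le hψ hC (hmem u) (hmem uh) ((hmem vh).sub (hmem u))
  rw [← Lp_norm_sub_eq_lpNorm, ← map_sub] at hmono
  rw [← Lp_norm_sub_eq_lpNorm, ← Lp_norm_sub_eq_lpNorm, ← Lp_norm_eq_lpNorm,
    norm_sub_rev (γ vh), ← map_sub, ← map_sub] at hgrowth
  have hquad : α * ‖γ (u - uh)‖ ^ 2 ≤ α * (c * ‖u - uh‖) ^ 2 := by
    gcongr
    exact hγ (u - uh)
  have hprod : C * (‖γ (u - uh)‖ * ‖γ (u - vh)‖) ≤ C * ((c * ‖u - uh‖) * (c * ‖u - vh‖)) := by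
    gcongr
    · exact (norm_nonneg _).trans (hγ (u - uh))
    · exact hγ (u - uh)
    · exact hγ (u - vh)
  linarith

theorem mul_sq_norm_sub_le_of_vhiResidual_nonneg (hγ : ∀ v, ‖γ v‖ ≤ c * ‖v‖)
    (hψ : LocallyLipschitz ψ)
    (hC : HasLinearClarkeGrowth ψ C) (hα : 0 ≤ α)
    (hmon : IsClarkeRelaxedMonotone ψ α)
    (hALip : ∀ v₁ v₂, ‖A v₁ - A v₂‖ ≤ L * ‖v₁ - v₂‖)
    (hAmon : ∀ v₁ v₂, m * ‖v₁ - v₂‖ ^ 2 ≤ (A v₁ - A v₂) (v₁ - v₂))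
    (hu : 0 ≤ vhiResidual γ ψ A Φ f u uh u) (huh : 0 ≤ vhiResidual γ ψ A Φ f uh vh uh) :
    (m - α * c ^ 2) * ‖u - uh‖ ^ 2 ≤
      (L + C * c ^ 2) * (‖u - uh‖ * ‖u - vh‖) +
        2 * C * (√(μ.real Set.univ) + ‖γ u‖) * ‖γ (u - vh)‖ + vhiResidual γ ψ A Φ f u vh u := by
  have hALip' : (A uh - A u) (vh - u) ≤ L * ‖u - uh‖ * ‖u - vh‖ := by
    rw [norm_sub_rev u uh, norm_sub_rev u vh]
    exact (le_abs_self _).trans ((A uh - A u).le_of_opNorm_le (hALip uh u) (vh - u))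
  linarith [hAmon u uh, apply_sub_le_of_vhiResidual_nonneg hu huh,
    clarkeIntegral_error_le hγ hψ hC hα hmon u uh vh]

theorem stmt19_general (hγ : ∀ v, ‖γ v‖ ≤ c * ‖v‖) (hψ : LocallyLipschitz ψ)
    (hC : HasLinearClarkeGrowth ψ C) (hα : 0 ≤ α)
    (hmon : IsClarkeRelaxedMonotone ψ α)
    (hALip : ∀ v₁ v₂, ‖A v₁ - A v₂‖ ≤ L * ‖v₁ - v₂‖)
    (hAmon : ∀ v₁ v₂, m * ‖v₁ - v₂‖ ^ 2 ≤ (A v₁ - A v₂) (v₁ - v₂))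
    (hsmall : α * c ^ 2 < m) {K : Set V} (hu : IsVHISolution γ ψ A Φ f K u) :
    ∃ C' > 0, ∀ Kh ⊆ K, ∀ uh, IsVHISolution γ ψ A Φ f Kh uh → ∀ vh ∈ Kh,
      ‖u - uh‖ ^ 2 ≤
        C' * (‖u - vh‖ ^ 2 + ‖γ (u - vh)‖ + vhiResidual γ ψ A Φ f u vh u) := by
  have hC0 : 0 ≤ C := hC.nonneg hψ
  have hδ : 0 < m - α * c ^ 2 := sub_pos.2 hsmall
  have hD : 0 ≤ 2 * C * (√(μ.real Set.univ) + ‖γ u‖) := by positivity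
  refine ⟨_, ?_, fun Kh hKh uh huh vh hvh => sq_le_mul_of_mul_sq_le hδ hD (norm_nonneg _)
    (hu.2 vh (hKh hvh)) (mul_sq_norm_sub_le_of_vhiResidual_nonneg hγ hψ hC hα hmon hALip hAmon
      (hu.2 uh (hKh huh.1)) (huh.2 vh hvh))⟩
  positivity

end ErrorEstimate

theorem stmt19 {V : Type*} [NormedAddCommGroup V] [InnerProductSpace ℝ V] [CompleteSpace V]
    {Δ : Type*} [MeasurableSpace Δ] (μ : Measure Δ) [IsFiniteMeasure μ]
    (m : ℕ) (hm : 1 ≤ m)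
    (γψ : V →L[ℝ] (Lp (EuclideanSpace ℝ (Fin m)) 2 μ))
    (cΔ : ℝ) (hcΔ : 0 < cΔ) (hγ : ∀ v : V, ‖γψ v‖ ≤ cΔ * ‖v‖)
    (ψ : EuclideanSpace ℝ (Fin m) → ℝ)
    (hψlip : ∀ z : EuclideanSpace ℝ (Fin m),
      ∃ (L : NNReal) (s : Set (EuclideanSpace ℝ (Fin m))), s ∈ 𝓝 z ∧ LipschitzOnWith L ψ s)
    (cψ : ℝ) (hcψ : 0 ≤ cψ)
    (hψgrowth : ∀ z ξ : EuclideanSpace ℝ (Fin m),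
      (∀ w, ⟪ξ, w⟫ ≤ clarkeDeriv ψ z w) → ‖ξ‖ ≤ cψ * (1 + ‖z‖))
    (αψ : ℝ) (hαψ : 0 ≤ αψ)
    (hψmon : ∀ z₁ z₂ : EuclideanSpace ℝ (Fin m),
      clarkeDeriv ψ z₁ (z₂ - z₁) + clarkeDeriv ψ z₂ (z₁ - z₂) ≤ αψ * ‖z₁ - z₂‖ ^ 2)
    (K : Set V) (hKne : K.Nonempty) (hKcl : IsClosed K) (hKcv : Convex ℝ K)
    (A : V → (V →L[ℝ] ℝ)) (LA : ℝ) (hLA : 0 < LA)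
    (hALip : ∀ v₁ v₂ : V, ‖A v₁ - A v₂‖ ≤ LA * ‖v₁ - v₂‖)
    (mA : ℝ) (hmA : 0 < mA)
    (hAmon : ∀ v₁ v₂ : V, (A v₁ - A v₂) (v₁ - v₂) ≥ mA * ‖v₁ - v₂‖ ^ 2)
    (Φ : V → ℝ) (hΦcv : ConvexOn ℝ Set.univ Φ) (hΦcont : Continuous Φ)
    (f : V →L[ℝ] ℝ) (hsmall : αψ * cΔ ^ 2 < mA)
    (u : V) (huK : u ∈ K)
    (hu : ∀ v ∈ K,
      (A u) (v - u) + Φ v - Φ u +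
        (∫ x, clarkeDeriv ψ ((γψ u) x) ((γψ v) x - (γψ u) x) ∂μ) ≥ f (v - u))
    (R : V → V → ℝ)
    (hR : ∀ v w : V, R v w =
      (A u) (v - w) + Φ v - Φ w +
        (∫ x, clarkeDeriv ψ ((γψ u) x) ((γψ v) x - (γψ w) x) ∂μ) - f (v - w)) :
    ∃ c > (0:ℝ), ∀ (Vh : Submodule ℝ V), FiniteDimensional ℝ Vh →
      ∀ (Kh : Set V), Kh.Nonempty → IsClosed Kh → Convex ℝ Kh → Kh ⊆ (Vh : Set V) →
      Kh ⊆ K →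
      ∀ uh : V, uh ∈ Kh →
      (∀ vh ∈ Kh,
        (A uh) (vh - uh) + Φ vh - Φ uh +
          (∫ x, clarkeDeriv ψ ((γψ uh) x) ((γψ vh) x - (γψ uh) x) ∂μ) ≥ f (vh - uh)) →
      ∀ vh ∈ Kh,
        ‖u - uh‖ ^ 2 ≤ c * (‖u - vh‖ ^ 2 + ‖γψ (u - vh)‖ + R vh u) := by
  obtain ⟨c, hc, hle⟩ := stmt19_general hγ hψlip (hasLinearClarkeGrowth_iff_inner.2 hψgrowth)
    hαψ hψmon hALip hAmon hsmall ⟨huK, fun v hv => sub_nonneg.2 (hu v hv)⟩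
  exact ⟨c, hc, fun _ _ Kh _ _ _ _ hKhK uh huh hdisc vh hvh => hR vh u ▸
    hle Kh hKhK uh ⟨huh, fun v hv => sub_nonneg.2 (hdisc v hv)⟩ vh hvh⟩
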